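/- arXiv:0907.1000 — 2 statements merged into one kernel-verified Lean document; each statement's English description precedes it below -/
import Mathlib

section
/- Let Ω ⊆ ℝ² be open, ε > 0, h_ex ∈ ℝ, and let f, h₀ : Ω → ℝ be smooth with Δf = f and Δh₀ = h₀ on Ω; set Z := ∇f − h_ex ∇^⊥ h₀. Suppose v : Ω × ℝ → ℂ and B : Ω × ℝ → ℝ² are smooth and satisfy, pointwise on Ω × ℝ with h' := curl B: ∂_t v + ifv = Δ_B v + (v/ε²)(1−|v|²) + 2i ∇_B v · Z + ivf − v|Z|², and ∂_t B + ∇f = ∇^⊥ h' + (iv, ∇_B v) + |v|²∇f − (|v|²−1) h_ex ∇^⊥ h₀. Then the Ginzburg-Landau energy density satisfies, pointwise on Ω × ℝ: ∂_t g⁰_ε(v,B) = div(∂_t v, ∇_B v) + curl(h' ∂_t B) − |∂_t v|² − |∂_t B|² + (|v|²−1) Z · ∂_t B + 2(∂_t v, i∇_B v) · Z − (v, ∂_t v)|Z|². -/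
noncomputable section

open Complex

/-- Real inner product of two complex numbers: `(a,b) = Re a · Re b + Im a · Im b`. -/
def rip (a b : ℂ) : ℝ := a.re * b.re + a.im * b.im

/-- `(a, X)` for `a : ℂ` and `X : ℂ²`: the vector in `ℝ²` with components `(a,X₁)`, `(a,X₂)`. -/
def ripv (a : ℂ) (X : ℂ × ℂ) : ℝ × ℝ := (rip a X.1, rip a X.2)

/-- Dot product of `X : ℂ²` with `Z : ℝ²`: `X·Z = X₁Z₁ + X₂Z₂ ∈ ℂ`. -/
def cdotR (X : ℂ × ℂ) (Z : ℝ × ℝ) : ℂ := X.1 * (Z.1 : ℂ) + X.2 * (Z.2 : ℂ)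

/-- Euclidean dot product on `ℝ²`. -/
def rdot (a b : ℝ × ℝ) : ℝ := a.1 * b.1 + a.2 * b.2

/-- Perpendicular of a vector: `Z^⊥ = (−Z₂, Z₁)`. -/
def perp (a : ℝ × ℝ) : ℝ × ℝ := (-a.2, a.1)

/-! ### Spatial differential operators for functions on `ℝ²` -/

/-- First spatial partial derivative `∂₁`. -/
def pd1 {E : Type*} [NormedAddCommGroup E] [NormedSpace ℝ E]
    (f : ℝ × ℝ → E) (x : ℝ × ℝ) : E := fderiv ℝ f x (1, 0)

/-- Second spatial partial derivative `∂₂`. -/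
def pd2 {E : Type*} [NormedAddCommGroup E] [NormedSpace ℝ E]
    (f : ℝ × ℝ → E) (x : ℝ × ℝ) : E := fderiv ℝ f x (0, 1)

/-- Gradient `∇g = (∂₁g, ∂₂g)`. -/
def sgrad (g : ℝ × ℝ → ℝ) (x : ℝ × ℝ) : ℝ × ℝ := (pd1 g x, pd2 g x)

/-- Perpendicular gradient `∇^⊥ g = (−∂₂g, ∂₁g)`. -/
def sgradPerp (g : ℝ × ℝ → ℝ) (x : ℝ × ℝ) : ℝ × ℝ := (-(pd2 g x), pd1 g x)

/-- Laplacian `Δg = ∂₁∂₁g + ∂₂∂₂g`. -/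
def slap (g : ℝ × ℝ → ℝ) (x : ℝ × ℝ) : ℝ := pd1 (pd1 g) x + pd2 (pd2 g) x

/-- Curl of a vector field: `curl X = ∂₁X₂ − ∂₂X₁`. -/
def scurl (X : ℝ × ℝ → ℝ × ℝ) (x : ℝ × ℝ) : ℝ := (pd1 X x).2 - (pd2 X x).1

/-- Divergence of a vector field: `div X = ∂₁X₁ + ∂₂X₂`. -/
def sdiv (X : ℝ × ℝ → ℝ × ℝ) (x : ℝ × ℝ) : ℝ := (pd1 X x).1 + (pd2 X x).2

/-- Covariant partial derivative `∂₁^A u = ∂₁u − iA₁u`. -/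
def cpd1 (A : ℝ × ℝ → ℝ × ℝ) (u : ℝ × ℝ → ℂ) (x : ℝ × ℝ) : ℂ :=
  pd1 u x - Complex.I * ((A x).1 : ℂ) * u x

/-- Covariant partial derivative `∂₂^A u = ∂₂u − iA₂u`. -/
def cpd2 (A : ℝ × ℝ → ℝ × ℝ) (u : ℝ × ℝ → ℂ) (x : ℝ × ℝ) : ℂ :=
  pd2 u x - Complex.I * ((A x).2 : ℂ) * u x

/-- Covariant gradient `∇_A u = ∇u − iAu`. -/
def covGrad (A : ℝ × ℝ → ℝ × ℝ) (u : ℝ × ℝ → ℂ) (x : ℝ × ℝ) : ℂ × ℂ :=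
  (cpd1 A u x, cpd2 A u x)

/-- Covariant Laplacian `Δ_A u = ∂₁^A ∂₁^A u + ∂₂^A ∂₂^A u`. -/
def covLap (A : ℝ × ℝ → ℝ × ℝ) (u : ℝ × ℝ → ℂ) (x : ℝ × ℝ) : ℂ :=
  cpd1 A (cpd1 A u) x + cpd2 A (cpd2 A u) x

/-- Vorticity `μ(u,A) = curl((iu, ∇_A u) + A)`. -/
def svort (u : ℝ × ℝ → ℂ) (A : ℝ × ℝ → ℝ × ℝ) (x : ℝ × ℝ) : ℝ :=
  scurl (fun y => ripv (Complex.I * u y) (covGrad A u y) + A y) x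

/-- Ginzburg–Landau energy density
`g⁰_ε(u,A) = ½(|∇_A u|² + (1−|u|²)²/(2ε²) + (curl A)²)`. -/
def glEnergy (ε : ℝ) (u : ℝ × ℝ → ℂ) (A : ℝ × ℝ → ℝ × ℝ) (x : ℝ × ℝ) : ℝ :=
  (1 / 2) * (Complex.normSq (cpd1 A u x) + Complex.normSq (cpd2 A u x)
    + (1 - Complex.normSq (u x)) ^ 2 / (2 * ε ^ 2) + (scurl A x) ^ 2)

/-! ### Space-time differential operators for functions on `ℝ² × ℝ`
(spatial operators act in the spatial variables, `tdt` is the time derivative) -/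

/-- First spatial partial derivative `∂₁`. -/
def sp1 {E : Type*} [NormedAddCommGroup E] [NormedSpace ℝ E]
    (f : (ℝ × ℝ) × ℝ → E) (z : (ℝ × ℝ) × ℝ) : E := fderiv ℝ f z ((1, 0), 0)

/-- Second spatial partial derivative `∂₂`. -/
def sp2 {E : Type*} [NormedAddCommGroup E] [NormedSpace ℝ E]
    (f : (ℝ × ℝ) × ℝ → E) (z : (ℝ × ℝ) × ℝ) : E := fderiv ℝ f z ((0, 1), 0)

/-- Time derivative `∂_t`. -/
def tdt {E : Type*} [NormedAddCommGroup E] [NormedSpace ℝ E]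
    (f : (ℝ × ℝ) × ℝ → E) (z : (ℝ × ℝ) × ℝ) : E := fderiv ℝ f z ((0, 0), 1)

/-- Spatial gradient. -/
def tgrad (g : (ℝ × ℝ) × ℝ → ℝ) (z : (ℝ × ℝ) × ℝ) : ℝ × ℝ := (sp1 g z, sp2 g z)

/-- Spatial perpendicular gradient `∇^⊥ g = (−∂₂g, ∂₁g)`. -/
def tgradPerp (g : (ℝ × ℝ) × ℝ → ℝ) (z : (ℝ × ℝ) × ℝ) : ℝ × ℝ := (-(sp2 g z), sp1 g z)

/-- Spatial Laplacian. -/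
def tlap (g : (ℝ × ℝ) × ℝ → ℝ) (z : (ℝ × ℝ) × ℝ) : ℝ := sp1 (sp1 g) z + sp2 (sp2 g) z

/-- Spatial curl of a time-dependent vector field. -/
def tcurl (X : (ℝ × ℝ) × ℝ → ℝ × ℝ) (z : (ℝ × ℝ) × ℝ) : ℝ := (sp1 X z).2 - (sp2 X z).1

/-- Spatial divergence of a time-dependent vector field. -/
def tdiv (X : (ℝ × ℝ) × ℝ → ℝ × ℝ) (z : (ℝ × ℝ) × ℝ) : ℝ := (sp1 X z).1 + (sp2 X z).2

/-- Covariant partial derivative `∂₁^B w = ∂₁w − iB₁w`. -/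
def tcpd1 (B : (ℝ × ℝ) × ℝ → ℝ × ℝ) (w : (ℝ × ℝ) × ℝ → ℂ) (z : (ℝ × ℝ) × ℝ) : ℂ :=
  sp1 w z - Complex.I * ((B z).1 : ℂ) * w z

/-- Covariant partial derivative `∂₂^B w = ∂₂w − iB₂w`. -/
def tcpd2 (B : (ℝ × ℝ) × ℝ → ℝ × ℝ) (w : (ℝ × ℝ) × ℝ → ℂ) (z : (ℝ × ℝ) × ℝ) : ℂ :=
  sp2 w z - Complex.I * ((B z).2 : ℂ) * w z

/-- Covariant gradient `∇_B w = ∇w − iBw` (spatial). -/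
def tcovGrad (B : (ℝ × ℝ) × ℝ → ℝ × ℝ) (w : (ℝ × ℝ) × ℝ → ℂ) (z : (ℝ × ℝ) × ℝ) : ℂ × ℂ :=
  (tcpd1 B w z, tcpd2 B w z)

/-- Covariant Laplacian `Δ_B w`. -/
def tcovLap (B : (ℝ × ℝ) × ℝ → ℝ × ℝ) (w : (ℝ × ℝ) × ℝ → ℂ) (z : (ℝ × ℝ) × ℝ) : ℂ :=
  tcpd1 B (tcpd1 B w) z + tcpd2 B (tcpd2 B w) z

/-- Covariant time derivative `∂_ξ w = ∂_t w + iξw`. -/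
def covt (ξ : (ℝ × ℝ) × ℝ → ℝ) (w : (ℝ × ℝ) × ℝ → ℂ) (z : (ℝ × ℝ) × ℝ) : ℂ :=
  tdt w z + Complex.I * (ξ z : ℂ) * w z

/-- Vorticity `μ(w,B) = curl((iw, ∇_B w) + B)`. -/
def tvort (w : (ℝ × ℝ) × ℝ → ℂ) (B : (ℝ × ℝ) × ℝ → ℝ × ℝ) (z : (ℝ × ℝ) × ℝ) : ℝ :=
  tcurl (fun y => ripv (Complex.I * w y) (tcovGrad B w y) + B y) z

/-- Velocity `V(w,B,ξ) = ∇(iw,∂_ξ w) − ∂_t(iw,∇_B w) − (∂_t B + ∇ξ)`. -/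
def tvel (w : (ℝ × ℝ) × ℝ → ℂ) (B : (ℝ × ℝ) × ℝ → ℝ × ℝ) (ξ : (ℝ × ℝ) × ℝ → ℝ)
    (z : (ℝ × ℝ) × ℝ) : ℝ × ℝ :=
  tgrad (fun y => rip (Complex.I * w y) (covt ξ w y)) z
    - tdt (fun y => ripv (Complex.I * w y) (tcovGrad B w y)) z
    - (tdt B z + tgrad ξ z)

/-- Time-dependent Ginzburg–Landau energy density. -/
def tglEnergy (ε : ℝ) (w : (ℝ × ℝ) × ℝ → ℂ) (B : (ℝ × ℝ) × ℝ → ℝ × ℝ)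
    (z : (ℝ × ℝ) × ℝ) : ℝ :=
  (1 / 2) * (Complex.normSq (tcpd1 B w z) + Complex.normSq (tcpd2 B w z)
    + (1 - Complex.normSq (w z)) ^ 2 / (2 * ε ^ 2) + (tcurl B z) ^ 2)

theorem aux_hasFDerivAt_dir {E : Type*} [NormedAddCommGroup E] [NormedSpace ℝ E]
    {g : (ℝ × ℝ) × ℝ → E} {z : (ℝ × ℝ) × ℝ} (hg : ContDiffAt ℝ (⊤ : ℕ∞) g z)
    (e : (ℝ × ℝ) × ℝ) :
    HasFDerivAt (fun y => fderiv ℝ g y e) ((fderiv ℝ (fderiv ℝ g) z).flip e) z := by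
  have h1 : ContDiffAt ℝ 1 (fderiv ℝ g) z :=
    hg.fderiv_right (m := 1) (by norm_cast)
  have h2 : HasFDerivAt (fderiv ℝ g) (fderiv ℝ (fderiv ℝ g) z) z :=
    (h1.differentiableAt (by norm_num)).hasFDerivAt
  have h3 := h2.clm_apply (hasFDerivAt_const e z)
  have h4 : (fderiv ℝ g z).comp (0 : ((ℝ × ℝ) × ℝ) →L[ℝ] ((ℝ × ℝ) × ℝ))
      + (fderiv ℝ (fderiv ℝ g) z).flip e = (fderiv ℝ (fderiv ℝ g) z).flip e := by
    rw [ContinuousLinearMap.comp_zero, zero_add]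
  rw [← h4]
  exact h3

theorem aux_symm {E : Type*} [NormedAddCommGroup E] [NormedSpace ℝ E]
    {g : (ℝ × ℝ) × ℝ → E} {z : (ℝ × ℝ) × ℝ} (hg : ContDiffAt ℝ (⊤ : ℕ∞) g z)
    (d e : (ℝ × ℝ) × ℝ) :
    fderiv ℝ (fderiv ℝ g) z d e = fderiv ℝ (fderiv ℝ g) z e d := by
  have : IsSymmSndFDerivAt ℝ g z :=
    hg.isSymmSndFDerivAt (by simp; norm_cast)
  exact this.eq d e

theorem aux_rip {a b : (ℝ × ℝ) × ℝ → ℂ} {a' b' : ((ℝ × ℝ) × ℝ) →L[ℝ] ℂ} {z : (ℝ × ℝ) × ℝ}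
    (ha : HasFDerivAt a a' z) (hb : HasFDerivAt b b' z) :
    ∃ L : ((ℝ × ℝ) × ℝ) →L[ℝ] ℝ, HasFDerivAt (fun y => rip (a y) (b y)) L z ∧
      ∀ d, L d = rip (a' d) (b z) + rip (a z) (b' d) := by
  have har := Complex.reCLM.hasFDerivAt.comp z ha
  have hai := Complex.imCLM.hasFDerivAt.comp z ha
  have hbr := Complex.reCLM.hasFDerivAt.comp z hb
  have hbi := Complex.imCLM.hasFDerivAt.comp z hb
  refine ⟨_, (har.mul hbr).add (hai.mul hbi), fun d => ?_⟩
  simp [rip]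
  ring

theorem aux_cov {w u : (ℝ × ℝ) × ℝ → ℂ} {b : (ℝ × ℝ) × ℝ → ℝ}
    {w' u' : ((ℝ × ℝ) × ℝ) →L[ℝ] ℂ} {b' : ((ℝ × ℝ) × ℝ) →L[ℝ] ℝ} {z : (ℝ × ℝ) × ℝ}
    (hw : HasFDerivAt w w' z) (hu : HasFDerivAt u u' z) (hb : HasFDerivAt b b' z) :
    ∃ L : ((ℝ × ℝ) × ℝ) →L[ℝ] ℂ,
      HasFDerivAt (fun y => w y - Complex.I * (b y : ℂ) * u y) L z ∧
      ∀ d, L d = w' d - Complex.I * ((b' d : ℝ) : ℂ) * u z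
        - Complex.I * (b z : ℂ) * u' d := by
  have hbc := Complex.ofRealCLM.hasFDerivAt.comp z hb
  refine ⟨_, hw.sub ((hbc.const_mul Complex.I).mul hu), fun d => ?_⟩
  simp
  ring

/-- evolution of the Ginzburg–Landau energy density for solutions of
the modified equations in the Φ = f gauge. -/
theorem energy_density_evolution_gauge_fixed
(Ω : Set (ℝ × ℝ)) (hΩ : IsOpen Ω) (ε : ℝ) (hε : 0 < ε) (h_ex : ℝ)
    (f h₀ : ℝ × ℝ → ℝ)
    (hf : ContDiffOn ℝ (⊤ : ℕ∞) f Ω) (hh₀ : ContDiffOn ℝ (⊤ : ℕ∞) h₀ Ω)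
    (hΔf : ∀ x ∈ Ω, slap f x = f x) (hΔh₀ : ∀ x ∈ Ω, slap h₀ x = h₀ x)
    (Z : ℝ × ℝ → ℝ × ℝ) (hZ : Z = fun x => sgrad f x - h_ex • sgradPerp h₀ x)
    (v : (ℝ × ℝ) × ℝ → ℂ) (B : (ℝ × ℝ) × ℝ → ℝ × ℝ)
    (hv : ContDiffOn ℝ (⊤ : ℕ∞) v (Ω ×ˢ (Set.univ : Set ℝ)))
    (hB : ContDiffOn ℝ (⊤ : ℕ∞) B (Ω ×ˢ (Set.univ : Set ℝ)))
    (heq1 : ∀ x ∈ Ω, ∀ t : ℝ,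
      tdt v (x, t) + Complex.I * (f x : ℂ) * v (x, t)
        = tcovLap B v (x, t)
          + v (x, t) / (ε ^ 2 : ℂ) * (1 - (Complex.normSq (v (x, t)) : ℂ))
          + 2 * Complex.I * cdotR (tcovGrad B v (x, t)) (Z x)
          + Complex.I * v (x, t) * (f x : ℂ)
          - v (x, t) * ((rdot (Z x) (Z x) : ℝ) : ℂ))
    (heq2 : ∀ x ∈ Ω, ∀ t : ℝ,
      tdt B (x, t) + sgrad f x
        = tgradPerp (tcurl B) (x, t)
          + ripv (Complex.I * v (x, t)) (tcovGrad B v (x, t))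
          + (Complex.normSq (v (x, t))) • sgrad f x
          - ((Complex.normSq (v (x, t)) - 1) * h_ex) • sgradPerp h₀ x) :
    ∀ x ∈ Ω, ∀ t : ℝ,
      tdt (tglEnergy ε v B) (x, t)
        = tdiv (fun y => ripv (tdt v y) (tcovGrad B v y)) (x, t)
          + tcurl (fun y => (tcurl B y) • tdt B y) (x, t)
          - Complex.normSq (tdt v (x, t))
          - rdot (tdt B (x, t)) (tdt B (x, t))
          + (Complex.normSq (v (x, t)) - 1) * rdot (Z x) (tdt B (x, t))
          + 2 * rdot (ripv (tdt v (x, t))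
              (Complex.I * tcpd1 B v (x, t), Complex.I * tcpd2 B v (x, t))) (Z x)
          - rip (v (x, t)) (tdt v (x, t)) * rdot (Z x) (Z x) := by
  intro x hx t
  have hmem : Ω ×ˢ (Set.univ : Set ℝ) ∈ nhds (x, t) :=
    (hΩ.prod isOpen_univ).mem_nhds ⟨hx, Set.mem_univ t⟩
  have hvc := hv.contDiffAt hmem
  have hBc := hB.contDiffAt hmem
  have e1 := heq1 x hx t
  have e2 := heq2 x hx t
  have hZx : Z x = sgrad f x - h_ex • sgradPerp h₀ x := by rw [hZ]
  clear heq1 heq2 hZ hΔf hΔh₀ hmem hv hB hf hh₀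
  generalize hz : ((x, t) : (ℝ × ℝ) × ℝ) = z at *
  have hvd : HasFDerivAt v (fderiv ℝ v z) z :=
    (hvc.differentiableAt (by simp)).hasFDerivAt
  have hBd : HasFDerivAt B (fderiv ℝ B z) z :=
    (hBc.differentiableAt (by simp)).hasFDerivAt
  have hB1 := (ContinuousLinearMap.fst ℝ ℝ ℝ).hasFDerivAt.comp z hBd
  have hB2 := (ContinuousLinearMap.snd ℝ ℝ ℝ).hasFDerivAt.comp z hBd
  have hv1 := aux_hasFDerivAt_dir hvc ((1, 0), 0)
  have hv2 := aux_hasFDerivAt_dir hvc ((0, 1), 0)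
  have hvt := aux_hasFDerivAt_dir hvc ((0, 0), 1)
  have hBB1 := aux_hasFDerivAt_dir hBc ((1, 0), 0)
  have hBB2 := aux_hasFDerivAt_dir hBc ((0, 1), 0)
  have hBt := aux_hasFDerivAt_dir hBc ((0, 0), 1)
  obtain ⟨D1, hD1, hD1'⟩ := aux_cov hv1 hvd hB1
  obtain ⟨D2, hD2, hD2'⟩ := aux_cov hv2 hvd hB2
  change HasFDerivAt (tcpd1 B v) D1 z at hD1
  change HasFDerivAt (tcpd2 B v) D2 z at hD2
  have hh : HasFDerivAt (tcurl B) _ z :=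
    ((ContinuousLinearMap.snd ℝ ℝ ℝ).hasFDerivAt.comp z hBB1).sub ((ContinuousLinearMap.fst ℝ ℝ ℝ).hasFDerivAt.comp z hBB2)
  obtain ⟨N0, hN0, hN0'⟩ := aux_rip hvd hvd
  obtain ⟨N1, hN1, hN1'⟩ := aux_rip hD1 hD1
  obtain ⟨N2, hN2, hN2'⟩ := aux_rip hD2 hD2
  obtain ⟨P1, hP1, hP1'⟩ := aux_rip hvt hD1
  obtain ⟨P2, hP2, hP2'⟩ := aux_rip hvt hD2
  have hE : HasFDerivAt (tglEnergy ε v B) _ z :=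
    (((hN1.add hN2).add (((hN0.const_sub 1).pow 2).mul_const (2 * ε ^ 2)⁻¹)).add
      (hh.pow 2)).const_mul (1 / 2)
  have hP : HasFDerivAt (fun y => ripv (tdt v y) (tcovGrad B v y)) _ z := hP1.prodMk hP2
  have hC : HasFDerivAt (fun y => (tcurl B y) • tdt B y) _ z := hh.smul hBt
  have sv1 := aux_symm hvc ((0, 0), 1) ((1, 0), 0)
  have sv2 := aux_symm hvc ((0, 0), 1) ((0, 1), 0)
  have sB1 := aux_symm hBc ((0, 0), 1) ((1, 0), 0)
  have sB2 := aux_symm hBc ((0, 0), 1) ((0, 1), 0)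
  have hεne : ε ≠ 0 := hε.ne'
  simp only [tcovLap] at e1
  rw [show tcpd1 B (tcpd1 B v) z = D1 ((1, 0), 0) - Complex.I * ((B z).1 : ℂ) * tcpd1 B v z by
    rw [tcpd1, sp1, hD1.fderiv], show tcpd2 B (tcpd2 B v) z = D2 ((0, 1), 0) - Complex.I * ((B z).2 : ℂ) * tcpd2 B v z by
    rw [tcpd2, sp2, hD2.fderiv]] at e1
  simp only [tgradPerp, sp1, sp2, hh.fderiv] at e2
  have g1 : tdt (tglEnergy ε v B) z = fderiv ℝ (tglEnergy ε v B) z ((0, 0), 1) := rfl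
  rw [hE.fderiv] at g1
  have g2 : tdiv (fun y => ripv (tdt v y) (tcovGrad B v y)) z
      = (fderiv ℝ (fun y => ripv (tdt v y) (tcovGrad B v y)) z ((1, 0), 0)).1
        + (fderiv ℝ (fun y => ripv (tdt v y) (tcovGrad B v y)) z ((0, 1), 0)).2 := rfl
  rw [hP.fderiv] at g2
  have g3 : tcurl (fun y => (tcurl B y) • tdt B y) z
      = (fderiv ℝ (fun y => (tcurl B y) • tdt B y) z ((1, 0), 0)).2
        - (fderiv ℝ (fun y => (tcurl B y) • tdt B y) z ((0, 1), 0)).1 := rfl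
  rw [hC.fderiv] at g3
  rw [g1, g2, g3]
  clear g1 g2 g3 hE hP hC hh
  have hk : v z / (ε ^ 2 : ℂ) = (((ε ^ 2)⁻¹ : ℝ) : ℂ) * v z := by
    push_cast
    rw [div_eq_mul_inv, mul_comm]
  have hk2 : (2 * ε ^ 2)⁻¹ = (ε ^ 2)⁻¹ / 2 := by
    field_simp
  rw [hk] at e1
  rw [hk2]
  clear hk hk2
  generalize (ε ^ 2)⁻¹ = k at *
  have hcurl : tcurl B z = (fderiv ℝ B z ((1, 0), 0)).2 - (fderiv ℝ B z ((0, 1), 0)).1 := rfl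
  have c1 := congrArg Complex.re e1
  have c2 := congrArg Complex.im e1
  have c3 := congrArg Prod.fst e2
  have c4 := congrArg Prod.snd e2
  have cZ1 := congrArg Prod.fst hZx
  have cZ2 := congrArg Prod.snd hZx
  have dv1 : fderiv ℝ v z ((1, 0), 0) = tcpd1 B v z + Complex.I * ((B z).1 : ℂ) * v z := by
    simp [tcpd1, sp1]
  have dv2 : fderiv ℝ v z ((0, 1), 0) = tcpd2 B v z + Complex.I * ((B z).2 : ℂ) * v z := by
    simp [tcpd2, sp2]
  have dt1 := hD1' ((0, 0), 1)
  have dt2 := hD2' ((0, 0), 1)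
  clear e1 e2 hZx hD1' hD2'
  simp only [ContinuousLinearMap.flip_apply, ContinuousLinearMap.comp_apply, Function.comp,
    ContinuousLinearMap.coe_fst', ContinuousLinearMap.coe_snd', sv1, sv2] at dt1 dt2
  simp only [tdt, tcovGrad] at *
  generalize tcpd1 B v z = E1 at *
  generalize tcpd2 B v z = E2 at *
  simp [hN0', hN1', hN2', hP1', hP2', dt1, dt2, sB1, sB2, rip, ripv, rdot, cdotR, tcovGrad, Complex.normSq_apply] at c1 c2 c3 c4 cZ1 cZ2 ⊢
  linear_combination (fderiv ℝ v z ((0, 0), 1)).re * c1 + (fderiv ℝ v z ((0, 0), 1)).im * c2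
    + (fderiv ℝ B z ((0, 0), 1)).1 * c3 + (fderiv ℝ B z ((0, 0), 1)).2 * c4
    - ((v z).re * (v z).re + (v z).im * (v z).im - 1) * (fderiv ℝ B z ((0, 0), 1)).1 * cZ1
    - ((v z).re * (v z).re + (v z).im * (v z).im - 1) * (fderiv ℝ B z ((0, 0), 1)).2 * cZ2


end
end

section
/- Let Ω ⊆ ℝ² be open, ε > 0, h_ex ∈ ℝ, and let f, h₀ : Ω → ℝ be smooth with Δf = f and Δh₀ = h₀ on Ω; set Z := ∇f − h_ex ∇^⊥ h₀. Suppose v : Ω × ℝ → ℂ and B : Ω × ℝ → ℝ² are smooth and satisfy, pointwise on Ω × ℝ with h' := curl B: ∂_t v + ifv = Δ_B v + (v/ε²)(1−|v|²) + 2i ∇_B v · Z + ivf − v|Z|², and ∂_t B + ∇f = ∇^⊥ h' + (iv, ∇_B v) + |v|²∇f − (|v|²−1) h_ex ∇^⊥ h₀. Then the modified energy density g̃⁰_ε(v,B) := g⁰_ε(v,B) + ½|v|²|Z|² satisfies, pointwise on Ω × ℝ: ∂_t g̃⁰_ε(v,B) = div(∂_t v, ∇_B v) + curl(h' ∂_t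 B) − |∂_t v|² − |∂_t B|² + V(v,B,0) · Z. -/
noncomputable section

open Complex

theorem D_re {X : (ℝ × ℝ) × ℝ → ℂ} {z} (hX : DifferentiableAt ℝ X z) (e) :
    fderiv ℝ (fun y => (X y).re) z e = (fderiv ℝ X z e).re := by
  have h : HasFDerivAt (fun y => (X y).re) (Complex.reCLM.comp (fderiv ℝ X z)) z :=
    (Complex.reCLM.hasFDerivAt).comp z hX.hasFDerivAt
  rw [h.fderiv]
  rfl

theorem D_im {X : (ℝ × ℝ) × ℝ → ℂ} {z} (hX : DifferentiableAt ℝ X z) (e) :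
    fderiv ℝ (fun y => (X y).im) z e = (fderiv ℝ X z e).im := by
  have h : HasFDerivAt (fun y => (X y).im) (Complex.imCLM.comp (fderiv ℝ X z)) z :=
    (Complex.imCLM.hasFDerivAt).comp z hX.hasFDerivAt
  rw [h.fderiv]
  rfl

theorem dif_re {X : (ℝ × ℝ) × ℝ → ℂ} {z} (hX : DifferentiableAt ℝ X z) :
    DifferentiableAt ℝ (fun y => (X y).re) z :=
  (Complex.reCLM.differentiableAt).comp z hX

theorem dif_im {X : (ℝ × ℝ) × ℝ → ℂ} {z} (hX : DifferentiableAt ℝ X z) :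
    DifferentiableAt ℝ (fun y => (X y).im) z :=
  (Complex.imCLM.differentiableAt).comp z hX

theorem dif_ofReal {X : (ℝ × ℝ) × ℝ → ℝ} {z} (hX : DifferentiableAt ℝ X z) :
    DifferentiableAt ℝ (fun y => (X y : ℂ)) z :=
  (Complex.ofRealCLM.differentiableAt).comp z hX

theorem D_ofReal {X : (ℝ × ℝ) × ℝ → ℝ} {z} (hX : DifferentiableAt ℝ X z) (e) :
    fderiv ℝ (fun y => (X y : ℂ)) z e = ((fderiv ℝ X z e : ℝ) : ℂ) := by
  have h : HasFDerivAt (fun y => (X y : ℂ)) (Complex.ofRealCLM.comp (fderiv ℝ X z)) z :=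
    (Complex.ofRealCLM.hasFDerivAt).comp z hX.hasFDerivAt
  rw [h.fderiv]
  rfl

theorem D_mulR {X Y : (ℝ × ℝ) × ℝ → ℝ} {z} (hX : DifferentiableAt ℝ X z)
    (hY : DifferentiableAt ℝ Y z) (e) :
    fderiv ℝ (fun y => X y * Y y) z e = fderiv ℝ X z e * Y z + X z * fderiv ℝ Y z e := by
  rw [fderiv_fun_mul hX hY]
  simp
  ring

theorem D_mulC {X Y : (ℝ × ℝ) × ℝ → ℂ} {z} (hX : DifferentiableAt ℝ X z)
    (hY : DifferentiableAt ℝ Y z) (e) :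
    fderiv ℝ (fun y => X y * Y y) z e = fderiv ℝ X z e * Y z + X z * fderiv ℝ Y z e := by
  rw [fderiv_fun_mul hX hY]
  simp
  ring

theorem D_add {E : Type*} [NormedAddCommGroup E] [NormedSpace ℝ E]
    {X Y : (ℝ × ℝ) × ℝ → E} {z} (hX : DifferentiableAt ℝ X z)
    (hY : DifferentiableAt ℝ Y z) (e) :
    fderiv ℝ (fun y => X y + Y y) z e = fderiv ℝ X z e + fderiv ℝ Y z e := by
  rw [fderiv_fun_add hX hY]; rfl

theorem D_sub {E : Type*} [NormedAddCommGroup E] [NormedSpace ℝ E]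
    {X Y : (ℝ × ℝ) × ℝ → E} {z} (hX : DifferentiableAt ℝ X z)
    (hY : DifferentiableAt ℝ Y z) (e) :
    fderiv ℝ (fun y => X y - Y y) z e = fderiv ℝ X z e - fderiv ℝ Y z e := by
  rw [fderiv_fun_sub hX hY]; rfl

theorem D_pair {X Y : (ℝ × ℝ) × ℝ → ℝ} {z} (hX : DifferentiableAt ℝ X z)
    (hY : DifferentiableAt ℝ Y z) (e) :
    fderiv ℝ (fun y => (X y, Y y)) z e = (fderiv ℝ X z e, fderiv ℝ Y z e) := by
  rw [(hX.hasFDerivAt.prodMk hY.hasFDerivAt).fderiv]; rfl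

theorem D_fst {X : (ℝ × ℝ) × ℝ → ℝ × ℝ} {z} (hX : DifferentiableAt ℝ X z) (e) :
    fderiv ℝ (fun y => (X y).1) z e = (fderiv ℝ X z e).1 := by
  rw [hX.hasFDerivAt.fst.fderiv]; rfl

theorem D_snd {X : (ℝ × ℝ) × ℝ → ℝ × ℝ} {z} (hX : DifferentiableAt ℝ X z) (e) :
    fderiv ℝ (fun y => (X y).2) z e = (fderiv ℝ X z e).2 := by
  rw [hX.hasFDerivAt.snd.fderiv]; rfl

theorem dif_rip {X Y : (ℝ × ℝ) × ℝ → ℂ} {z} (hX : DifferentiableAt ℝ X z)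
    (hY : DifferentiableAt ℝ Y z) : DifferentiableAt ℝ (fun y => rip (X y) (Y y)) z :=
  ((dif_re hX).mul (dif_re hY)).add ((dif_im hX).mul (dif_im hY))

theorem D_rip {X Y : (ℝ × ℝ) × ℝ → ℂ} {z} (hX : DifferentiableAt ℝ X z)
    (hY : DifferentiableAt ℝ Y z) (e) :
    fderiv ℝ (fun y => rip (X y) (Y y)) z e
      = rip (fderiv ℝ X z e) (Y z) + rip (X z) (fderiv ℝ Y z e) := by
  unfold rip
  rw [D_add ((dif_re hX).fun_mul (dif_re hY)) ((dif_im hX).fun_mul (dif_im hY)),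
    D_mulR (dif_re hX) (dif_re hY), D_mulR (dif_im hX) (dif_im hY),
    D_re hX, D_re hY, D_im hX, D_im hY]
  ring

theorem normSq_rip (a : ℂ) : Complex.normSq a = rip a a := by
  rw [Complex.normSq_apply]; rfl

/-- Directional derivatives of smooth functions are smooth. -/
theorem smooth_dir {E F : Type*} [NormedAddCommGroup E] [NormedSpace ℝ E]
    [NormedAddCommGroup F] [NormedSpace ℝ F] {W : Set F} (hW : IsOpen W)
    {X : F → E} (hX : ContDiffOn ℝ (⊤ : ℕ∞) X W) (e : F) :
    ContDiffOn ℝ (⊤ : ℕ∞) (fun y => fderiv ℝ X y e) W :=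
  (hX.fderiv_of_isOpen hW (by simp)).clm_apply contDiffOn_const

theorem smooth_dif {E F : Type*} [NormedAddCommGroup E] [NormedSpace ℝ E]
    [NormedAddCommGroup F] [NormedSpace ℝ F] {W : Set F} (hW : IsOpen W)
    {X : F → E} (hX : ContDiffOn ℝ (⊤ : ℕ∞) X W) {z : F} (hz : z ∈ W) :
    DifferentiableAt ℝ X z :=
  (hX.contDiffAt (hW.mem_nhds hz)).differentiableAt (by simp)

theorem D_comm {E F : Type*} [NormedAddCommGroup E] [NormedSpace ℝ E]
    [NormedAddCommGroup F] [NormedSpace ℝ F] {W : Set F} (hW : IsOpen W)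
    {X : F → E} (hX : ContDiffOn ℝ (⊤ : ℕ∞) X W) {z : F} (hz : z ∈ W) (e e' : F) :
    fderiv ℝ (fun y => fderiv ℝ X y e) z e' = fderiv ℝ (fun y => fderiv ℝ X y e') z e := by
  have h1 : DifferentiableAt ℝ (fderiv ℝ X) z :=
    smooth_dif hW (hX.fderiv_of_isOpen hW (m := (⊤ : ℕ∞)) (by simp)) hz
  have h2 : IsSymmSndFDerivAt ℝ X z :=
    (hX.contDiffAt (hW.mem_nhds hz)).isSymmSndFDerivAt
      (by simp only [minSmoothness_of_isRCLikeNormedField]; exact WithTop.coe_le_coe.2 (le_top : (2 : ℕ∞) ≤ ⊤))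
  have h3 : ∀ a b : F, fderiv ℝ (fun y => fderiv ℝ X y a) z b = fderiv ℝ (fderiv ℝ X) z b a := by
    intro a b
    rw [(h1.hasFDerivAt.clm_apply (hasFDerivAt_const a z)).fderiv]
    simp
  rw [h3, h3]
  exact h2 _ _

/-- Leibniz rule for a covariant derivative. -/
theorem D_cov {U w : (ℝ × ℝ) × ℝ → ℂ} {p : (ℝ × ℝ) × ℝ → ℝ} {z}
    (hU : DifferentiableAt ℝ U z) (hw : DifferentiableAt ℝ w z) (hp : DifferentiableAt ℝ p z) (e) :
    DifferentiableAt ℝ (fun y => U y - Complex.I * (p y : ℂ) * w y) z ∧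
    fderiv ℝ (fun y => U y - Complex.I * (p y : ℂ) * w y) z e
      = fderiv ℝ U z e - Complex.I * ((fderiv ℝ p z e : ℝ) : ℂ) * w z
        - Complex.I * (p z : ℂ) * fderiv ℝ w z e := by
  have h0 := dif_ofReal hp
  have hc : DifferentiableAt ℝ (fun _ : (ℝ × ℝ) × ℝ => Complex.I) z := differentiableAt_const _
  have h1 : DifferentiableAt ℝ (fun y => Complex.I * (p y : ℂ)) z := hc.mul h0
  refine ⟨hU.sub (h1.mul hw), ?_⟩
  rw [D_sub hU (h1.fun_mul hw), D_mulC h1 hw, D_mulC hc h0, D_ofReal hp]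
  simp
  ring

/-- evolution of the modified energy density
g̃⁰_ε(v,B) = g⁰_ε(v,B) + ½|v|²|Z|², with the interaction term V(v,B,0)·Z. -/
theorem modified_energy_density_evolution
(Ω : Set (ℝ × ℝ)) (hΩ : IsOpen Ω) (ε : ℝ) (hε : 0 < ε) (h_ex : ℝ)
    (f h₀ : ℝ × ℝ → ℝ)
    (hf : ContDiffOn ℝ (⊤ : ℕ∞) f Ω) (hh₀ : ContDiffOn ℝ (⊤ : ℕ∞) h₀ Ω)
    (hΔf : ∀ x ∈ Ω, slap f x = f x) (hΔh₀ : ∀ x ∈ Ω, slap h₀ x = h₀ x)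
    (Z : ℝ × ℝ → ℝ × ℝ) (hZ : Z = fun x => sgrad f x - h_ex • sgradPerp h₀ x)
    (v : (ℝ × ℝ) × ℝ → ℂ) (B : (ℝ × ℝ) × ℝ → ℝ × ℝ)
    (hv : ContDiffOn ℝ (⊤ : ℕ∞) v (Ω ×ˢ (Set.univ : Set ℝ)))
    (hB : ContDiffOn ℝ (⊤ : ℕ∞) B (Ω ×ˢ (Set.univ : Set ℝ)))
    (heq1 : ∀ x ∈ Ω, ∀ t : ℝ,
      tdt v (x, t) + Complex.I * (f x : ℂ) * v (x, t)
        = tcovLap B v (x, t)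
          + v (x, t) / (ε ^ 2 : ℂ) * (1 - (Complex.normSq (v (x, t)) : ℂ))
          + 2 * Complex.I * cdotR (tcovGrad B v (x, t)) (Z x)
          + Complex.I * v (x, t) * (f x : ℂ)
          - v (x, t) * ((rdot (Z x) (Z x) : ℝ) : ℂ))
    (heq2 : ∀ x ∈ Ω, ∀ t : ℝ,
      tdt B (x, t) + sgrad f x
        = tgradPerp (tcurl B) (x, t)
          + ripv (Complex.I * v (x, t)) (tcovGrad B v (x, t))
          + (Complex.normSq (v (x, t))) • sgrad f x
          - ((Complex.normSq (v (x, t)) - 1) * h_ex) • sgradPerp h₀ x) :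
    ∀ x ∈ Ω, ∀ t : ℝ,
      tdt (fun y => tglEnergy ε v B y
          + (1 / 2) * Complex.normSq (v y) * rdot (Z y.1) (Z y.1)) (x, t)
        = tdiv (fun y => ripv (tdt v y) (tcovGrad B v y)) (x, t)
          + tcurl (fun y => (tcurl B y) • tdt B y) (x, t)
          - Complex.normSq (tdt v (x, t))
          - rdot (tdt B (x, t)) (tdt B (x, t))
          + rdot (tvel v B (fun _ => 0) (x, t)) (Z x) := by
  intro x hx t
  set W : Set ((ℝ × ℝ) × ℝ) := Ω ×ˢ (Set.univ : Set ℝ) with hWdef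
  have hW : IsOpen W := hΩ.prod isOpen_univ
  have hz : (x, t) ∈ W := ⟨hx, trivial⟩
  have E1 := heq1 x hx t
  have E2 := heq2 x hx t
  have hZd : DifferentiableAt ℝ Z x := by
    rw [hZ]
    have a1 : DifferentiableAt ℝ (pd1 f) x := smooth_dif hΩ (smooth_dir hΩ hf _) hx
    have a2 : DifferentiableAt ℝ (pd2 f) x := smooth_dif hΩ (smooth_dir hΩ hf _) hx
    have a3 : DifferentiableAt ℝ (pd1 h₀) x := smooth_dif hΩ (smooth_dir hΩ hh₀ _) hx
    have a4 : DifferentiableAt ℝ (pd2 h₀) x := smooth_dif hΩ (smooth_dir hΩ hh₀ _) hx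
    exact (a1.prodMk a2).sub ((a4.neg.prodMk a3).const_smul h_ex)
  have hZx : Z x = sgrad f x - h_ex • sgradPerp h₀ x := by rw [hZ]
  -- `|Z|²` as a function on space-time
  obtain ⟨hQ, hQt⟩ : DifferentiableAt ℝ (fun y : (ℝ × ℝ) × ℝ => rdot (Z y.1) (Z y.1)) (x, t) ∧
      fderiv ℝ (fun y : (ℝ × ℝ) × ℝ => rdot (Z y.1) (Z y.1)) (x, t) ((0, 0), 1) = 0 := by
    have b1 : DifferentiableAt ℝ (fun y => rdot (Z y) (Z y)) x :=
      (hZd.fst.mul hZd.fst).add (hZd.snd.mul hZd.snd)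
    have b2 : HasFDerivAt (fun y : (ℝ × ℝ) × ℝ => rdot (Z y.1) (Z y.1)) _ (x, t) :=
      HasFDerivAt.comp (x, t) (f := Prod.fst) (g := fun y => rdot (Z y) (Z y))
        b1.hasFDerivAt hasFDerivAt_fst
    refine ⟨b2.differentiableAt, ?_⟩
    rw [b2.fderiv]
    exact map_zero (fderiv ℝ (fun y => rdot (Z y) (Z y)) x)
  generalize hzz : ((x, t) : (ℝ × ℝ) × ℝ) = z at *
  have hzx : z.1 = x := by rw [← hzz]
  have dv := smooth_dif hW hv hz
  have dB := smooth_dif hW hB hz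
  have d1 : DifferentiableAt ℝ (sp1 v) z := smooth_dif hW (smooth_dir hW hv _) hz
  have d2 : DifferentiableAt ℝ (sp2 v) z := smooth_dif hW (smooth_dir hW hv _) hz
  have d3 : DifferentiableAt ℝ (tdt v) z := smooth_dif hW (smooth_dir hW hv _) hz
  have k1 : DifferentiableAt ℝ (sp1 B) z := smooth_dif hW (smooth_dir hW hB _) hz
  have k2 : DifferentiableAt ℝ (sp2 B) z := smooth_dif hW (smooth_dir hW hB _) hz
  have k3 : DifferentiableAt ℝ (tdt B) z := smooth_dif hW (smooth_dir hW hB _) hz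
  have s1 : tdt (sp1 v) z = sp1 (tdt v) z := D_comm hW hv hz _ _
  have s2 : tdt (sp2 v) z = sp2 (tdt v) z := D_comm hW hv hz _ _
  have s3 : tdt (sp1 B) z = sp1 (tdt B) z := D_comm hW hB hz _ _
  have s4 : tdt (sp2 B) z = sp2 (tdt B) z := D_comm hW hB hz _ _
  have c1 : DifferentiableAt ℝ (tcpd1 B v) z := (D_cov d1 dv dB.fst 0).1
  have c2 : DifferentiableAt ℝ (tcpd2 B v) z := (D_cov d2 dv dB.snd 0).1
  have c1t : tdt (tcpd1 B v) z = sp1 (tdt v) z - Complex.I * ((tdt B z).1 : ℂ) * v z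
      - Complex.I * ((B z).1 : ℂ) * tdt v z := by
    refine (D_cov d1 dv dB.fst _).2.trans ?_
    rw [D_fst dB, ← s1]; rfl
  have c2t : tdt (tcpd2 B v) z = sp2 (tdt v) z - Complex.I * ((tdt B z).2 : ℂ) * v z
      - Complex.I * ((B z).2 : ℂ) * tdt v z := by
    refine (D_cov d2 dv dB.snd _).2.trans ?_
    rw [D_snd dB, ← s2]; rfl
  have dh : DifferentiableAt ℝ (tcurl B) z := k1.snd.sub k2.fst
  have ht : tdt (tcurl B) z = (sp1 (tdt B) z).2 - (sp2 (tdt B) z).1 := by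
    refine (D_sub k1.snd k2.fst _).trans ?_
    rw [D_snd k1, D_fst k2, ← s3, ← s4]; rfl
  -- divergence term
  have hdiv : tdiv (fun y => ripv (tdt v y) (tcovGrad B v y)) z
      = rip (sp1 (tdt v) z) (tcpd1 B v z) + rip (tdt v z) (sp1 (tcpd1 B v) z)
        + (rip (sp2 (tdt v) z) (tcpd2 B v z) + rip (tdt v z) (sp2 (tcpd2 B v) z)) := by
    have := D_pair (dif_rip d3 c1) (dif_rip d3 c2)
    have e1 := congrArg Prod.fst (this ((1, 0), 0))
    have e2 := congrArg Prod.snd (this ((0, 1), 0))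
    rw [D_rip d3 c1] at e1
    rw [D_rip d3 c2] at e2
    exact congrArg₂ (· + ·) e1 e2
  -- curl term
  have hcurl : tcurl (fun y => (tcurl B y) • tdt B y) z
      = (sp1 (tcurl B) z * (tdt B z).2 + tcurl B z * (sp1 (tdt B) z).2)
        - (sp2 (tcurl B) z * (tdt B z).1 + tcurl B z * (sp2 (tdt B) z).1) := by
    have := D_pair (dh.mul k3.fst) (dh.mul k3.snd)
    have e1 := congrArg Prod.snd (this ((1, 0), 0))
    have e2 := congrArg Prod.fst (this ((0, 1), 0))
    replace e1 := e1.trans (D_mulR dh k3.snd _)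
    replace e2 := e2.trans (D_mulR dh k3.fst _)
    rw [D_snd k3] at e1
    rw [D_fst k3] at e2
    exact congrArg₂ (· - ·) e1 e2
  -- velocity
  have hc : DifferentiableAt ℝ (fun _ : (ℝ × ℝ) × ℝ => Complex.I) z := differentiableAt_const _
  have div' : DifferentiableAt ℝ (fun y => Complex.I * v y) z := hc.mul dv
  have Div : ∀ e, fderiv ℝ (fun y => Complex.I * v y) z e = Complex.I * fderiv ℝ v z e := by
    intro e
    rw [D_mulC hc dv]; simp
  have hcovt : covt (fun _ => 0) v = tdt v := by
    funext y; simp [covt]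
  have hvel : tvel v B (fun _ => 0) z =
      (rip (Complex.I * sp1 v z) (tdt v z) + rip (Complex.I * v z) (sp1 (tdt v) z)
        - (rip (Complex.I * tdt v z) (tcpd1 B v z) + rip (Complex.I * v z) (tdt (tcpd1 B v) z))
        - (tdt B z).1,
       rip (Complex.I * sp2 v z) (tdt v z) + rip (Complex.I * v z) (sp2 (tdt v) z)
        - (rip (Complex.I * tdt v z) (tcpd2 B v z) + rip (Complex.I * v z) (tdt (tcpd2 B v) z))
        - (tdt B z).2) := by
    have g1 : tgrad (fun y => rip (Complex.I * v y) (tdt v y)) z =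
        (rip (Complex.I * sp1 v z) (tdt v z) + rip (Complex.I * v z) (sp1 (tdt v) z),
         rip (Complex.I * sp2 v z) (tdt v z) + rip (Complex.I * v z) (sp2 (tdt v) z)) := by
      refine Prod.ext ?_ ?_
      · refine (D_rip div' d3 _).trans ?_
        rw [Div]; rfl
      · refine (D_rip div' d3 _).trans ?_
        rw [Div]; rfl
    have g2 : tdt (fun y => ripv (Complex.I * v y) (tcovGrad B v y)) z =
        (rip (Complex.I * tdt v z) (tcpd1 B v z) + rip (Complex.I * v z) (tdt (tcpd1 B v) z),
         rip (Complex.I * tdt v z) (tcpd2 B v z) + rip (Complex.I * v z) (tdt (tcpd2 B v) z)) := by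
      refine (D_pair (dif_rip div' c1) (dif_rip div' c2) _).trans ?_
      rw [D_rip div' c1, D_rip div' c2, Div]; rfl
    have g3 : tgrad (fun _ => (0 : ℝ)) z = 0 := by
      simp [tgrad, sp1, sp2]
    unfold tvel
    rw [hcovt, g1, g2, g3, add_zero]
    rfl
  -- energy
  have hen : tdt (fun y => tglEnergy ε v B y
          + (1 / 2) * Complex.normSq (v y) * rdot (Z y.1) (Z y.1)) z
      = rip (tcpd1 B v z) (tdt (tcpd1 B v) z) + rip (tcpd2 B v z) (tdt (tcpd2 B v) z)
        - (1 - rip (v z) (v z)) * rip (v z) (tdt v z) * (ε ^ 2)⁻¹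
        + tcurl B z * tdt (tcurl B) z + rip (v z) (tdt v z) * rdot (Z x) (Z x) := by
    have n1 := (dif_rip c1 c1).hasFDerivAt
    have n2 := (dif_rip c2 c2).hasFDerivAt
    have n3 := (dif_rip dv dv).hasFDerivAt
    have n4 := dh.hasFDerivAt
    have n5 := hQ.hasFDerivAt
    have m3 := (n3.const_sub 1).mul (n3.const_sub 1)
    have tot := ((((n1.add n2).add (m3.mul_const (2 * ε ^ 2)⁻¹)).add (n4.mul n4)).const_mul
      (1 / 2)).add ((n3.const_mul (1 / 2)).mul n5)
    have hfun : (fun y => tglEnergy ε v B y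
          + (1 / 2) * Complex.normSq (v y) * rdot (Z y.1) (Z y.1)) = fun y => (1 / 2) * (rip (tcpd1 B v y) (tcpd1 B v y) + rip (tcpd2 B v y) (tcpd2 B v y)
        + (1 - rip (v y) (v y)) * (1 - rip (v y) (v y)) * (2 * ε ^ 2)⁻¹ + tcurl B y * tcurl B y)
        + ((1 / 2) * rip (v y) (v y)) * rdot (Z y.1) (Z y.1) := by
      funext y
      simp only [tglEnergy, normSq_rip]
      ring
    rw [hfun]
    refine (congrArg (fun L => L ((0, 0), 1)) tot.fderiv).trans ?_
    have r1 := D_rip c1 c1 ((0, 0), 1)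
    have r2 := D_rip c2 c2 ((0, 0), 1)
    have r3 := D_rip dv dv ((0, 0), 1)
    have comm : ∀ a b, rip a b = rip b a := by intro a b; unfold rip; ring
    rw [comm] at r1 r2 r3
    simp only [ContinuousLinearMap.add_apply, ContinuousLinearMap.smul_apply,
      ContinuousLinearMap.neg_apply, smul_eq_mul, r1, r2, r3, hQt, mul_inv, tdt, hzx]
    simp
    ring
  rw [hen, hdiv, hcurl, hvel, c1t, c2t, ht, normSq_rip]
  -- components of the equations
  have E1r := congrArg Complex.re E1
  have E1i := congrArg Complex.im E1
  have E2a := congrArg Prod.fst E2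
  have E2b := congrArg Prod.snd E2
  have hZ1 := congrArg Prod.fst hZx
  have hZ2 := congrArg Prod.snd hZx
  have hin : (v z / (ε ^ 2 : ℂ)) = v z * (((ε ^ 2)⁻¹ : ℝ) : ℂ) := by
    push_cast; rfl
  rw [hin] at E1r E1i
  simp only [tcovLap, tcovGrad, tcpd1, tcpd2, cdotR, rdot, rip, ripv, tgradPerp, sgrad, sgradPerp,
    normSq_rip, Complex.add_re, Complex.add_im, Complex.sub_re, Complex.sub_im, Complex.mul_re,
    Complex.mul_im, Complex.I_re, Complex.I_im, Complex.ofReal_re, Complex.ofReal_im,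
    Complex.one_re, Complex.one_im, Complex.re_ofNat, Complex.im_ofNat,
    Prod.fst_add, Prod.snd_add, Prod.fst_sub, Prod.snd_sub, Prod.smul_fst, Prod.smul_snd,
    smul_eq_mul] at E1r E1i E2a E2b hZ1 hZ2 ⊢
  linear_combination (tdt v z).re * E1r + (tdt v z).im * E1i + (tdt B z).1 * E2a
    + (tdt B z).2 * E2b
    + (1 - ((v z).re * (v z).re + (v z).im * (v z).im)) * ((tdt B z).1 * hZ1 + (tdt B z).2 * hZ2)

end
end
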